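/- arXiv:0807.3890 — 2 statements merged into one kernel-verified Lean document; each statement's English description precedes it below -/
import Mathlib

section
/- Let H be a Hopf monoid in a symmetric monoidal category C (i.e. the braiding satisfies ψ_{Y,X} ∘ ψ_{X,Y} = id for all objects X, Y), and let (δ, σ) be a braided modular pair in involution for H. Then for every n ≥ 1 the (n+1)-fold composite τ_n ∘ ⋯ ∘ τ_n equals id_{H^{⊗n}}. -/
open CategoryTheory MonoidalCategory

universe v u

/-- A Hopf algebra object (a "braided Hopf algebra") in a braided monoidal category `C`,
consisting of an object `X` with multiplication `mul`, unit `one`, comultiplication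
`comul`, counit `counit` and antipode `antipode`, satisfying the usual axioms, with
the compatibility of `mul` and `comul` expressed via the braiding. -/
structure HopfObj (C : Type u) [Category.{v} C] [MonoidalCategory C]
    [BraidedCategory C] where
  X : C
  mul : X ⊗ X ⟶ X
  one : 𝟙_ C ⟶ X
  comul : X ⟶ X ⊗ X
  counit : X ⟶ 𝟙_ C
  antipode : X ⟶ X
  mul_assoc : (mul ▷ X) ≫ mul = (α_ X X X).hom ≫ (X ◁ mul) ≫ mul
  one_mul : (one ▷ X) ≫ mul = (λ_ X).hom
  mul_one : (X ◁ one) ≫ mul = (ρ_ X).hom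
  comul_assoc : comul ≫ (comul ▷ X) ≫ (α_ X X X).hom = comul ≫ (X ◁ comul)
  counit_comul : comul ≫ (counit ▷ X) = (λ_ X).inv
  comul_counit : comul ≫ (X ◁ counit) = (ρ_ X).inv
  mul_comul : mul ≫ comul =
      (comul ⊗ₘ comul) ≫ (α_ X X (X ⊗ X)).hom ≫ (X ◁ (α_ X X X).inv) ≫
        (X ◁ ((β_ X X).hom ▷ X)) ≫ (X ◁ (α_ X X X).hom) ≫
        (α_ X X (X ⊗ X)).inv ≫ (mul ⊗ₘ mul)
  one_comul : one ≫ comul = (λ_ (𝟙_ C)).inv ≫ (one ⊗ₘ one)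
  mul_counit : mul ≫ counit = (counit ⊗ₘ counit) ≫ (λ_ (𝟙_ C)).hom
  one_counit : one ≫ counit = 𝟙 (𝟙_ C)
  antipode_left : comul ≫ (antipode ▷ X) ≫ mul = counit ≫ one
  antipode_right : comul ≫ (X ◁ antipode) ≫ mul = counit ≫ one

variable {C : Type u} [Category.{v} C] [MonoidalCategory C] [SymmetricCategory C]

/-- The `δ`-twisted antipode `S̃ = λ_H ∘ (δ ⊗ S) ∘ Δ`. -/
def HopfObj.twist (A : _root_.HopfObj C) (δ : A.X ⟶ 𝟙_ C) : A.X ⟶ A.X :=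
  A.comul ≫ (δ ⊗ₘ A.antipode) ≫ (λ_ A.X).hom

/-- `δ : H ⟶ 𝟙` is a character, i.e. a morphism of monoid objects. -/
def HopfObj.IsCharacter (A : _root_.HopfObj C) (δ : A.X ⟶ 𝟙_ C) : Prop :=
  A.mul ≫ δ = (δ ⊗ₘ δ) ≫ (λ_ (𝟙_ C)).hom ∧ A.one ≫ δ = 𝟙 (𝟙_ C)

/-- `σ : 𝟙 ⟶ H` is a cocharacter, i.e. a morphism of comonoid objects. -/
def HopfObj.IsCocharacter (A : _root_.HopfObj C) (σ : 𝟙_ C ⟶ A.X) : Prop :=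
  σ ≫ A.comul = (λ_ (𝟙_ C)).inv ≫ (σ ⊗ₘ σ) ∧ σ ≫ A.counit = 𝟙 (𝟙_ C)

/-- The morphism `m ∘ (m ⊗ 1_H) ∘ ((S ∘ σ) ⊗ (S̃ ∘ S̃) ⊗ σ) : H ⟶ H`
(with unitors inserted). -/
def HopfObj.bmpiMap (A : _root_.HopfObj C) (δ : A.X ⟶ 𝟙_ C) (σ : 𝟙_ C ⟶ A.X) :
    A.X ⟶ A.X :=
  (λ_ A.X).inv ≫ ((σ ≫ A.antipode) ⊗ₘ (A.twist δ ≫ A.twist δ)) ≫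
    (ρ_ (A.X ⊗ A.X)).inv ≫ ((A.X ⊗ A.X) ◁ σ) ≫ (A.mul ▷ A.X) ≫ A.mul

/-- `(δ, σ)` is a braided modular pair in involution. -/
def HopfObj.IsBMPI (A : _root_.HopfObj C) (δ : A.X ⟶ 𝟙_ C) (σ : 𝟙_ C ⟶ A.X) : Prop :=
  σ ≫ δ = 𝟙 (𝟙_ C) ∧ A.bmpiMap δ σ = 𝟙 A.X

/-- Tensor powers, with `H^{⊗0} = 𝟙`, `H^{⊗1} = H` and `H^{⊗(n+1)} = H^{⊗n} ⊗ H`. -/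
def tensorPow (H : C) : ℕ → C
  | 0 => 𝟙_ C
  | 1 => H
  | n + 2 => tensorPow H (n + 1) ⊗ H

/-- The coherence isomorphism `H ⊗ H^{⊗n} ≅ H^{⊗(n+1)}`. -/
def tensorPowCons (H : C) : ∀ n : ℕ, H ⊗ tensorPow H n ≅ tensorPow H (n + 1)
  | 0 => ρ_ H
  | 1 => Iso.refl (H ⊗ H)
  | n + 2 => (α_ H (tensorPow H (n + 1)) H).symm ≪≫
      whiskerRightIso (tensorPowCons H (n + 1)) H

/-- Iterated multiplication `m_{n+1}` of the braided tensor product algebra structure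
on `H^{⊗(n+1)}`:  `m₁ = m` and
`m_{n+1} = (m_n ⊗ m) ∘ (1_{H^{⊗n}} ⊗ ψ_{H,H^{⊗n}} ⊗ 1_H)`. -/
def HopfObj.iterMul (A : _root_.HopfObj C) :
    ∀ n : ℕ, tensorPow A.X (n + 1) ⊗ tensorPow A.X (n + 1) ⟶ tensorPow A.X (n + 1)
  | 0 => A.mul
  | n + 1 =>
      (α_ (tensorPow A.X (n + 1)) A.X (tensorPow A.X (n + 1) ⊗ A.X)).hom ≫
      (tensorPow A.X (n + 1) ◁ (α_ A.X (tensorPow A.X (n + 1)) A.X).inv) ≫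
      (tensorPow A.X (n + 1) ◁ ((β_ A.X (tensorPow A.X (n + 1))).hom ▷ A.X)) ≫
      (tensorPow A.X (n + 1) ◁ (α_ (tensorPow A.X (n + 1)) A.X A.X).hom) ≫
      (α_ (tensorPow A.X (n + 1)) (tensorPow A.X (n + 1)) (A.X ⊗ A.X)).inv ≫
      (HopfObj.iterMul A n ⊗ₘ A.mul)

/-- Iterated comultiplication `Δ⁰ = 1_H`, `Δⁿ = (1_H ⊗ Δ^{n-1}) ∘ Δ : H ⟶ H^{⊗(n+1)}`
(up to coherence isomorphisms). -/
def HopfObj.iterComul (A : _root_.HopfObj C) : ∀ n : ℕ, A.X ⟶ tensorPow A.X (n + 1)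
  | 0 => 𝟙 A.X
  | n + 1 => A.comul ≫ (A.X ◁ HopfObj.iterComul A n) ≫ (tensorPowCons A.X (n + 1)).hom

/-- Appending `σ` as a last tensor factor, via `H^{⊗n} ≅ H^{⊗n} ⊗ 𝟙`. -/
def tensorPowSnoc (H : C) (σ : 𝟙_ C ⟶ H) : ∀ n : ℕ, tensorPow H n ⟶ tensorPow H (n + 1)
  | 0 => σ
  | n + 1 => (ρ_ (tensorPow H (n + 1))).inv ≫ (tensorPow H (n + 1) ◁ σ)

/-- The cyclic operator `τ_{n+1} = m_{n+1} ∘ ((Δⁿ ∘ S̃) ⊗ 1_{H^{⊗n}} ⊗ σ)` on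
`H^{⊗(n+1)}`, where the first tensor factor of `H^{⊗(n+1)} ≅ H ⊗ H^{⊗n}` is mapped by
`Δⁿ ∘ S̃` and `σ` is appended via `H^{⊗n} ≅ H^{⊗n} ⊗ 𝟙`. -/
def HopfObj.cyclicOp (A : _root_.HopfObj C) (δ : A.X ⟶ 𝟙_ C) (σ : 𝟙_ C ⟶ A.X) (n : ℕ) :
    tensorPow A.X (n + 1) ⟶ tensorPow A.X (n + 1) :=
  (tensorPowCons A.X n).inv ≫
    ((A.twist δ ≫ A.iterComul n) ⊗ₘ tensorPowSnoc A.X σ n) ≫ A.iterMul n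

/-- `Ψ_{n+1} : H^{⊗(n+1)} ⟶ H^{⊗(n+1)}`, the braiding `ψ_{H^{⊗n},H}` conjugated by the
coherence isomorphisms `H^{⊗(n+1)} ≅ H^{⊗n} ⊗ H` and `H ⊗ H^{⊗n} ≅ H^{⊗(n+1)}`
(and `Ψ₁ = 1_H`). -/
def tensorPowBraid (H : C) : ∀ n : ℕ, tensorPow H (n + 1) ⟶ tensorPow H (n + 1)
  | 0 => 𝟙 H
  | n + 1 => (β_ (tensorPow H (n + 1)) H).hom ≫ (tensorPowCons H (n + 1)).hom

/-- The `n`-fold composite of an endomorphism. -/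
def endoPow {X : C} (f : X ⟶ X) : ℕ → (X ⟶ X)
  | 0 => 𝟙 X
  | n + 1 => f ≫ endoPow f n

/-!
Let `p : H^{⊗(n+2)} ⟶ H^{⊗(n+1)}` send `g ⊗ x` to `Δⁿ(S̃ g) · x`. It has the section `x ↦ 1 ⊗ x`,
and left multiplication of its argument by `Δⁿ⁺¹(h)` only multiplies its value by `δ(h)`. Since
`τ x = p(x ⊗ σ)`, this covariance gives `τ(p(g ⊗ x)) = p(x ⊗ S̃²(g)σ)`, and the BMPI equation says
`S̃²(g)σ = σg`; hence `p` intertwines the rotation `g ⊗ x ↦ x ⊗ σg` with `τ`. As the braiding is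
symmetric, the `(n+2)`-nd power of that rotation is left multiplication by
`σ ⊗ ⋯ ⊗ σ = Δⁿ⁺¹(σ)`, which `p` absorbs because `δ(σ) = 1`.
-/

open MonObj ComonObj
open scoped CategoryTheory.HopfObj

variable {D : Type u} [Category.{v} D] [MonoidalCategory D]

/-- The convolution product of two morphisms from a comonoid to a monoid: the multiplication of
`CategoryTheory.Conv`, kept on plain morphisms so that it mixes with composition. -/
def convMul {X R : D} [ComonObj X] [MonObj R] (f g : X ⟶ R) : X ⟶ R :=
  Mul.mul (α := Conv X R) f g

local infixl:70 " ⋆ " => convMul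

section Convolution

variable {X R R' Z : D} [ComonObj X] [MonObj R] [MonObj R']

theorem convMul_eq (f g : X ⟶ R) : f ⋆ g = Δ ≫ f ▷ X ≫ R ◁ g ≫ μ :=
  rfl

theorem convMul_assoc (f g h : X ⟶ R) : f ⋆ g ⋆ h = f ⋆ (g ⋆ h) :=
  _root_.mul_assoc (G := Conv X R) f g h

theorem convMul_one (f : X ⟶ R) : f ⋆ (ε ≫ η) = f :=
  _root_.mul_one (M := Conv X R) f

theorem one_convMul (f : X ⟶ R) : (ε ≫ η) ⋆ f = f :=
  _root_.one_mul (M := Conv X R) f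

theorem convMul_comp (f g : X ⟶ R) (e : R ⟶ R') [IsMonHom e] :
    (f ⋆ g) ≫ e = (f ≫ e) ⋆ (g ≫ e) := by
  simp [convMul_eq, IsMonHom.mul_hom, MonoidalCategory.tensorHom_def, whisker_exchange_assoc]

/-- The left multiplication `x ⊗ r ↦ u(x) r` of a monoid by the values of a morphism `u`. -/
def mulLeft {X : D} (u : X ⟶ R) : X ⊗ R ⟶ R :=
  u ▷ R ≫ μ

/-- The left multiplication `r ↦ σ r` of a monoid by a point `σ`. -/
def pointMul (σ : 𝟙_ D ⟶ R) : R ⟶ R :=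
  (λ_ R).inv ≫ mulLeft σ

theorem mulLeft_comp {X Y : D} (u : X ⟶ Y) (v : Y ⟶ R) :
    mulLeft (u ≫ v) = u ▷ R ≫ mulLeft v := by
  simp [mulLeft]

theorem mulLeft_one : mulLeft η[R] = (λ_ R).hom :=
  MonObj.one_mul R

theorem mulLeft_comp_hom {X : D} (u : X ⟶ R) (e : R ⟶ R') [IsMonHom e] :
    mulLeft u ≫ e = X ◁ e ≫ mulLeft (u ≫ e) := by
  simp [mulLeft, IsMonHom.mul_hom, MonoidalCategory.tensorHom_def, whisker_exchange_assoc]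

theorem comp_pointMul (σ : 𝟙_ D ⟶ R) (e : R ⟶ R') [IsMonHom e] :
    e ≫ pointMul (σ ≫ e) = pointMul σ ≫ e := by
  simp [pointMul, mulLeft_comp_hom]

theorem mulLeft_tensorHom_mul {X Y : D} (u : X ⟶ R) (v : Y ⟶ R) :
    mulLeft ((u ⊗ₘ v) ≫ μ) = (α_ X Y R).hom ≫ X ◁ mulLeft v ≫ mulLeft u := by
  calc
    _ = (α_ X Y R).hom ≫ u ▷ (Y ⊗ R) ≫ R ◁ mulLeft v ≫ μ := by
      simp [mulLeft, MonoidalCategory.tensorHom_def]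
    _ = _ := by rw [← whisker_exchange_assoc, mulLeft.eq_def u]

theorem mulLeft_convMul (u v : X ⟶ R) :
    mulLeft (u ⋆ v) = Δ ▷ R ≫ (α_ X X R).hom ≫ X ◁ mulLeft v ≫ mulLeft u := by
  rw [← mulLeft_tensorHom_mul, ← mulLeft_comp, convMul_eq, MonoidalCategory.tensorHom_def,
    Category.assoc]

theorem mulLeft_convMul_congr_left {u v : X ⟶ R} {f : R ⟶ Z}
    (h : mulLeft u ≫ f = mulLeft v ≫ f) (w : X ⟶ R) :
    mulLeft (u ⋆ w) ≫ f = mulLeft (v ⋆ w) ≫ f := by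
  simp only [mulLeft_convMul, Category.assoc, h]

theorem convMul_eq_mulLeft (f g : X ⟶ R) : f ⋆ g = Δ ≫ X ◁ g ≫ mulLeft f := by
  rw [convMul_eq, mulLeft, whisker_exchange_assoc]

theorem counit_comp_convMul (σ : 𝟙_ D ⟶ R) (f : X ⟶ R) :
    (ε ≫ σ) ⋆ f = f ≫ pointMul σ := by
  simp [pointMul, convMul_eq, mulLeft, ← whisker_exchange_assoc]

theorem convMul_counit_comp (f : X ⟶ R) (σ : 𝟙_ D ⟶ R) :
    f ⋆ (ε ≫ σ) = f ≫ (ρ_ R).inv ≫ R ◁ σ ≫ μ := by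
  simp [convMul_eq, ← whisker_exchange_assoc]

end Convolution

instance isMonHom_comul [BraidedCategory D] (H : D) [BimonObj H] : IsMonHom Δ[H] where
  one_hom := BimonObj.one_comul H
  mul_hom := BimonObj.mul_comul H

section Twist

variable [BraidedCategory D] {H R Z : D} [CategoryTheory.HopfObj H] [MonObj R]

theorem antipode_convMul (b : H ⟶ R) [IsMonHom b] : (𝒮 ≫ b) ⋆ b = ε ≫ η := by
  have h : 𝒮 ⋆ 𝟙 H = ε ≫ η := by simp [convMul_eq]
  simpa [convMul_comp] using h =≫ b

theorem convMul_antipode (b : H ⟶ R) [IsMonHom b] : b ⋆ (𝒮 ≫ b) = ε ≫ η := by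
  have h : 𝟙 H ⋆ 𝒮 = ε ≫ η := by simp [convMul_eq]
  simpa [convMul_comp] using h =≫ b

/-- The antipode twisted by `δ`, in Sweedler notation `h ↦ δ(h₁) S(h₂)`. -/
def twistedAntipode (δ : H ⟶ 𝟙_ D) : H ⟶ H :=
  Δ ≫ (δ ⊗ₘ 𝒮) ≫ (λ_ H).hom

theorem twistedAntipode_comp (δ : H ⟶ 𝟙_ D) (b : H ⟶ R) [IsMonHom b] :
    twistedAntipode δ ≫ b = (δ ≫ η) ⋆ (𝒮 ≫ b) := by
  simp [twistedAntipode, convMul_eq, MonoidalCategory.tensorHom_def, ← whisker_exchange_assoc]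

theorem twistedAntipode_convMul (δ : H ⟶ 𝟙_ D) (b : H ⟶ R) [IsMonHom b] :
    (twistedAntipode δ ≫ b) ⋆ b = δ ≫ η := by
  rw [twistedAntipode_comp, convMul_assoc, antipode_convMul, convMul_one]

theorem one_twistedAntipode (δ : H ⟶ 𝟙_ D) [IsMonHom δ] :
    η ≫ twistedAntipode δ = η := by
  simp [twistedAntipode, MonoidalCategory.tensorHom_def]

theorem mul_twistedAntipode (δ : H ⟶ 𝟙_ D) [IsMonHom δ] :
    μ ≫ twistedAntipode δ =
      (twistedAntipode δ ⊗ₘ twistedAntipode δ) ≫ (β_ H H).hom ≫ μ := by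
  have h : twistedAntipode δ = (Δ ≫ δ ▷ H ≫ (λ_ H).hom) ≫ 𝒮 := by
    simp [twistedAntipode, MonoidalCategory.tensorHom_def]
  rw [h, ← Category.assoc, IsMonHom.mul_hom]
  simp [CategoryTheory.HopfObj.mul_antipode]

theorem mulLeft_comp_eq_iff (δ : H ⟶ 𝟙_ D) (a b : H ⟶ R) [IsMonHom b] (f : R ⟶ Z) :
    mulLeft a ≫ f = mulLeft (twistedAntipode δ ≫ b) ≫ f ↔
      mulLeft (a ⋆ b) ≫ f = mulLeft (δ ≫ η) ≫ f := by
  constructor <;> intro h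
  · rw [mulLeft_convMul_congr_left h, twistedAntipode_convMul]
  · have h' := mulLeft_convMul_congr_left h (𝒮 ≫ b)
    rwa [convMul_assoc, convMul_antipode, convMul_one, ← twistedAntipode_comp] at h'

end Twist

section TensorMon

variable [BraidedCategory D] {X P Q : D} [MonObj P] [MonObj Q]

variable (P Q) in
/-- The monoid morphism `p ↦ p ⊗ 1` into a tensor product of monoids. -/
def tensorInl : P ⟶ P ⊗ Q :=
  (ρ_ P).inv ≫ P ◁ η

variable (P Q) in
/-- The monoid morphism `q ↦ 1 ⊗ q` into a tensor product of monoids. -/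
def tensorInr : Q ⟶ P ⊗ Q :=
  (λ_ Q).inv ≫ η ▷ Q

instance isMonHom_tensorInr : IsMonHom (tensorInr P Q) :=
  have : IsMonHom η[P] := { mul_hom := by simp [unitors_equal] }
  inferInstanceAs (IsMonHom ((λ_ Q).inv ≫ η[P] ▷ Q))

theorem mulLeft_comp_tensorInl (p : X ⟶ P) :
    mulLeft (p ≫ tensorInl P Q) = (α_ X P Q).inv ≫ mulLeft p ▷ Q := by
  have h : (P ◁ η[Q]) ▷ (P ⊗ Q) ≫ tensorμ P Q P Q ≫ (μ ⊗ₘ μ) =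
      tensorμ P (𝟙_ D) P Q ≫ (μ ⊗ₘ (λ_ Q).hom) := by
    rw [← id_tensorHom, tensorμ_natural_left_assoc, tensorHom_comp_tensorHom]
    simp
  have hβ : (ρ_ P).inv ▷ (P ⊗ Q) ≫ tensorμ P (𝟙_ D) P Q =
      (α_ P P Q).inv ≫ (P ⊗ P) ◁ (λ_ Q).inv := by
    rw [tensorμ, braiding_tensorUnit_left]
    monoidal
  rw [mulLeft, MonObj.tensorObj.mul_def, tensorInl, comp_whiskerRight_assoc,
    comp_whiskerRight_assoc, h, reassoc_of% hβ, mulLeft]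
  monoidal

theorem mulLeft_comp_tensorInr (q : X ⟶ Q) :
    mulLeft (q ≫ tensorInr P Q) =
      (α_ X P Q).inv ≫ (β_ X P).hom ▷ Q ≫ (α_ P X Q).hom ≫ P ◁ mulLeft q := by
  have h : η[P] ▷ Q ▷ (P ⊗ Q) ≫ tensorμ P Q P Q ≫ (μ ⊗ₘ μ) =
      tensorμ (𝟙_ D) Q P Q ≫ ((λ_ P).hom ⊗ₘ μ) := by
    rw [← tensorHom_id η[P] Q, tensorμ_natural_left_assoc, tensorHom_comp_tensorHom]
    simp
  simp only [mulLeft, MonObj.tensorObj.mul_def, tensorInr, comp_whiskerRight, Category.assoc, h]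
  have hq : (β_ X P).hom ▷ Q ≫ (P ◁ q) ▷ Q = q ▷ P ▷ Q ≫ (β_ Q P).hom ▷ Q := by
    simp only [← comp_whiskerRight, BraidedCategory.braiding_naturality_left]
  calc
    _ = (α_ X P Q).inv ≫ (q ▷ P ▷ Q ≫ (β_ Q P).hom ▷ Q) ≫ (α_ P Q Q).hom ≫ P ◁ μ := by
      rw [tensorμ]
      monoidal
    _ = _ := by
      simp [← hq]

theorem convMul_tensorInl_tensorInr [ComonObj X] (f : X ⟶ P) (g : X ⟶ Q) :
    (f ≫ tensorInl P Q) ⋆ (g ≫ tensorInr P Q) = Δ ≫ (f ⊗ₘ g) := by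
  have h : f ▷ Q = X ◁ (λ_ Q).inv ≫ (α_ X (𝟙_ D) Q).inv ≫ (X ◁ η ≫ mulLeft f) ▷ Q := by
    rw [mulLeft, whisker_exchange_assoc]
    simp
  rw [convMul_eq_mulLeft, mulLeft_comp_tensorInl, MonoidalCategory.tensorHom_def', h]
  simp [tensorInr]

theorem pointMul_tensorHom (u : 𝟙_ D ⟶ P) (v : 𝟙_ D ⟶ Q) :
    pointMul ((λ_ (𝟙_ D)).inv ≫ (u ⊗ₘ v)) = pointMul u ⊗ₘ pointMul v := by
  have h : (λ_ (P ⊗ Q)).inv ≫ (λ_ (𝟙_ D)).inv ▷ (P ⊗ Q) ≫ tensorμ (𝟙_ D) (𝟙_ D) P Q =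
      (λ_ P).inv ⊗ₘ (λ_ Q).inv := by
    rw [Iso.inv_comp_eq, tensor_left_unitality]
    simp
  rw [pointMul, mulLeft, MonObj.tensorObj.mul_def, comp_whiskerRight_assoc,
    tensorμ_natural_left_assoc, reassoc_of% h]
  simp [pointMul, mulLeft]

end TensorMon

section Coinvariance

variable [BraidedCategory D] {H P Z : D} [CategoryTheory.HopfObj H] [MonObj P]

theorem mulLeft_comul_comp_mulLeft_twistedAntipode (δ : H ⟶ 𝟙_ D) [IsMonHom δ] (φ : H ⟶ P)
    [IsMonHom φ] :
    mulLeft (Δ ≫ H ◁ φ) ≫ mulLeft (twistedAntipode δ ≫ φ) =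
      mulLeft (δ ≫ η) ≫ mulLeft (twistedAntipode δ ≫ φ) := by
  -- `S̃(h₁ g) h₂ x = S̃(g) S̃(h₁) h₂ x = δ(h) S̃(g) x`; convolving with `h ↦ 1 ⊗ φ(h)` reduces this
  -- to the antimultiplicativity `S̃(h g) x = S̃(g) S̃(h) x`.
  have h : mulLeft (tensorInl H P) ≫ mulLeft (twistedAntipode δ ≫ φ) =
      mulLeft (twistedAntipode δ ≫ φ ≫ tensorInr H P) ≫ mulLeft (twistedAntipode δ ≫ φ) := by
    have hφ : μ ≫ twistedAntipode δ ≫ φ =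
        (β_ H H).hom ≫ ((twistedAntipode δ ≫ φ) ⊗ₘ (twistedAntipode δ ≫ φ)) ≫ μ := by
      rw [← Category.assoc, mul_twistedAntipode]
      simp [IsMonHom.mul_hom]
    rw [← Category.id_comp (tensorInl H P), mulLeft_comp_tensorInl, ← Category.assoc _ φ,
      mulLeft_comp_tensorInr]
    generalize twistedAntipode δ ≫ φ = ψ at hφ
    calc
      _ = (α_ H H P).inv ≫ mulLeft (μ ≫ ψ) := by simp [mulLeft]
      _ = _ := by
        rw [hφ, mulLeft_comp, mulLeft_tensorHom_mul]
        simp only [Category.assoc]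
  rw [mulLeft_comp_eq_iff, ← Category.id_comp (tensorInl H P),
    convMul_tensorInl_tensorInr, MonoidalCategory.id_tensorHom] at h
  exact h

theorem mulLeft_twistedAntipode_comp_of_coinvariant {δ : H ⟶ 𝟙_ D} {σ : 𝟙_ D ⟶ H} {φ : H ⟶ P}
    {f : P ⊗ H ⟶ Z} (hf : mulLeft (Δ ≫ φ ▷ H) ≫ f = mulLeft (δ ≫ η) ≫ f)
    (hσ : pointMul σ =
      twistedAntipode δ ≫ twistedAntipode δ ≫ (ρ_ H).inv ≫ H ◁ σ ≫ μ) :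
    mulLeft (twistedAntipode δ ≫ φ) ≫ (ρ_ P).inv ≫ P ◁ σ ≫ f =
      (β_ H P).hom ≫ P ◁ pointMul σ ≫ f := by
  -- Diagonal covariance moves the action across the tensor: `f(φ(h) x ⊗ y) = f(x ⊗ S̃(h) y)`.
  have h : mulLeft (φ ≫ tensorInl P H) ≫ f = mulLeft (twistedAntipode δ ≫ tensorInr P H) ≫ f := by
    rwa [mulLeft_comp_eq_iff, ← Category.id_comp (tensorInr P H), convMul_tensorInl_tensorInr,
      MonoidalCategory.tensorHom_id]
  rw [mulLeft_comp_tensorInl, mulLeft_comp_tensorInr] at h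
  replace h : mulLeft φ ▷ H ≫ f =
      (β_ H P).hom ▷ H ≫ (α_ P H H).hom ≫ P ◁ mulLeft (twistedAntipode δ) ≫ f := by
    simpa using h
  calc
    _ = twistedAntipode δ ▷ P ≫ (ρ_ (H ⊗ P)).inv ≫ (H ⊗ P) ◁ σ ≫ mulLeft φ ▷ H ≫ f := by
      rw [mulLeft_comp, whisker_exchange_assoc]
      simp
    _ = (twistedAntipode δ ▷ P ≫ (β_ H P).hom) ≫
        P ◁ ((ρ_ H).inv ≫ H ◁ σ ≫ mulLeft (twistedAntipode δ)) ≫ f := by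
      rw [h, whisker_exchange_assoc]
      simp
    _ = _ := by
      rw [hσ, BraidedCategory.braiding_naturality_left, mulLeft, whisker_exchange_assoc]
      simp

theorem pointMul_eq_of_bmpi {δ : H ⟶ 𝟙_ D} {σ : 𝟙_ D ⟶ H}
    (hΔ : σ ≫ Δ = (λ_ (𝟙_ D)).inv ≫ (σ ⊗ₘ σ)) (hε : σ ≫ ε = 𝟙 (𝟙_ D))
    (h : (λ_ H).inv ≫ ((σ ≫ 𝒮) ⊗ₘ (twistedAntipode δ ≫ twistedAntipode δ)) ≫
      (ρ_ (H ⊗ H)).inv ≫ (H ⊗ H) ◁ σ ≫ μ ▷ H ≫ μ = 𝟙 H) :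
    pointMul σ =
      twistedAntipode δ ≫ twistedAntipode δ ≫ (ρ_ H).inv ≫ H ◁ σ ≫ μ := by
  have hinv : (ε[H] ≫ σ) ⋆ (ε ≫ σ ≫ 𝒮) = ε ≫ η := by
    have hσ : (λ_ (𝟙_ D)).inv ≫ (σ ⊗ₘ σ) ≫ H ◁ 𝒮 ≫ μ = η := by
      simp [← reassoc_of% hΔ, reassoc_of% hε]
    rw [counit_comp_convMul, ← hσ]
    simp [pointMul, mulLeft, MonoidalCategory.tensorHom_def', ← whisker_exchange_assoc]
  have hconv : (ε[H] ≫ σ ≫ 𝒮) ⋆ (twistedAntipode δ ≫ twistedAntipode δ) ⋆ (ε ≫ σ) = 𝟙 H := by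
    rw [← h, counit_comp_convMul, convMul_counit_comp, whisker_exchange_assoc]
    simp [pointMul, mulLeft, MonoidalCategory.tensorHom_def']
  have hcancel := congrArg ((ε[H] ≫ σ) ⋆ ·) hconv
  simp only [convMul_assoc] at hcancel
  rw [← convMul_assoc, hinv, one_convMul, convMul_counit_comp, counit_comp_convMul] at hcancel
  simpa using hcancel.symm

end Coinvariance

section TensorPow

/-- The coherence isomorphism `H^{⊗n} ⊗ H ≅ H^{⊗(n+1)}`. -/
def tensorPowSucc (H : D) : ∀ n : ℕ, tensorPow H n ⊗ H ≅ tensorPow H (n + 1)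
  | 0 => λ_ H
  | _ + 1 => Iso.refl _

theorem tensorPowCons_succ (H : D) (n : ℕ) :
    H ◁ (tensorPowSucc H n).hom ≫ (tensorPowCons H (n + 1)).hom =
      (α_ H (tensorPow H n) H).inv ≫ (tensorPowCons H n).hom ▷ H ≫
        (tensorPowSucc H (n + 1)).hom := by
  cases n with
  | zero => simp [tensorPowSucc, tensorPowCons, tensorPow]
  | succ n =>
    change H ◁ 𝟙 _ ≫ (α_ _ _ _).inv ≫ (tensorPowCons H (n + 1)).hom ▷ H =
      (α_ _ _ _).inv ≫ (tensorPowCons H (n + 1)).hom ▷ H ≫ 𝟙 _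
    simp

theorem tensorPowSnoc_eq {H : D} (σ : 𝟙_ D ⟶ H) (n : ℕ) :
    tensorPowSnoc H σ n =
      (ρ_ (tensorPow H n)).inv ≫ tensorPow H n ◁ σ ≫ (tensorPowSucc H n).hom := by
  cases n <;> simp [tensorPowSucc, tensorPowSnoc, tensorPow, unitors_equal]

theorem tensorPowCons_comp_snoc {H : D} (σ : 𝟙_ D ⟶ H) (n : ℕ) :
    H ◁ tensorPowSnoc H σ n ≫ (tensorPowCons H (n + 1)).hom =
      (tensorPowCons H n).hom ≫ tensorPowSnoc H σ (n + 1) := by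
  rw [tensorPowSnoc_eq, tensorPowSnoc_eq, rightUnitor_inv_naturality_assoc,
    ← whisker_exchange_assoc]
  simp [tensorPowCons_succ]

end TensorPow

section Append

/-- The coherence morphism `H^{⊗a} ⊗ H^{⊗b} ⟶ H^{⊗n}` for `a + b = n`; the equation is an argument
so that both ways of splitting `a + 1 + b` have the same target. -/
def tensorPowAppend (H : D) {a : ℕ} :
    ∀ {b n : ℕ}, a + b = n → (tensorPow H a ⊗ tensorPow H b ⟶ tensorPow H n)
  | 0, _, rfl => (ρ_ (tensorPow H a)).hom
  | b + 1, _, rfl => tensorPow H a ◁ (tensorPowSucc H b).inv ≫ (α_ _ _ _).inv ≫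
      tensorPowAppend H (rfl : a + b = a + b) ▷ H ≫ (tensorPowSucc H (a + b)).hom

variable (H : D) {a b n : ℕ}

theorem tensorPowAppend_zero_right (h : n + 0 = n) :
    tensorPowAppend H h = (ρ_ (tensorPow H n)).hom :=
  rfl

theorem tensorPowAppend_succ_right (h : a + b = n) (h' : a + (b + 1) = n + 1) :
    tensorPow H a ◁ (tensorPowSucc H b).hom ≫ tensorPowAppend H h' =
      (α_ _ _ _).inv ≫ tensorPowAppend H h ▷ H ≫ (tensorPowSucc H n).hom := by
  subst h
  rw [tensorPowAppend]
  simp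

theorem tensorPowAppend_zero_left (h : 0 + n = n) :
    tensorPowAppend H h = (λ_ (tensorPow H n)).hom := by
  induction n with
  | zero => exact unitors_equal.symm
  | succ n ih =>
    refine (cancel_epi (tensorPow H 0 ◁ (tensorPowSucc H n).hom)).1 ?_
    rw [tensorPowAppend_succ_right H n.zero_add h, ih]
    exact (leftUnitor_tensor_hom_assoc _ _ _).symm.trans (leftUnitor_naturality _).symm

theorem tensorPowAppend_one_right (h : n + 1 = n + 1) :
    tensorPowAppend H h = (tensorPowSucc H n).hom := by
  change tensorPow H n ◁ (λ_ H).inv ≫ (α_ _ (𝟙_ D) _).inv ≫ (ρ_ _).hom ▷ H ≫ _ = _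
  simp

theorem tensorPowSucc_comp_append (h : a + 1 + b = n) (h' : a + (b + 1) = n) :
    (tensorPowSucc H a).hom ▷ tensorPow H b ≫ tensorPowAppend H h =
      (α_ _ _ _).hom ≫ tensorPow H a ◁ (tensorPowCons H b).hom ≫ tensorPowAppend H h' := by
  induction b generalizing n with
  | zero =>
    obtain rfl : a + 1 = n := h
    rw [tensorPowAppend_one_right]
    exact (rightUnitor_naturality _).trans (rightUnitor_tensor_hom_assoc _ _ _)
  | succ b ih =>
    obtain ⟨n, rfl⟩ : ∃ n', n = n' + 1 := ⟨a + 1 + b, by omega⟩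
    obtain ⟨hn, hn'⟩ : a + 1 + b = n ∧ a + (b + 1) = n := by omega
    have hcons := congrArg (tensorPow H a ◁ ·) (tensorPowCons_succ H b)
    simp only [whiskerLeft_comp] at hcons
    rw [← cancel_epi ((tensorPow H a ⊗ H) ◁ (tensorPowSucc H b).hom)]
    calc
      _ = (α_ _ _ _).inv ≫ ((tensorPowSucc H a).hom ▷ tensorPow H b ≫ tensorPowAppend H hn) ▷ H ≫
          (tensorPowSucc H n).hom := by
        rw [whisker_exchange_assoc, tensorPowAppend_succ_right H hn]
        simp
      _ = (α_ _ _ _).hom ≫ tensorPow H a ◁ (α_ _ _ _).inv ≫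
          tensorPow H a ◁ (tensorPowCons H b).hom ▷ H ≫ (α_ _ _ _).inv ≫
          tensorPowAppend H hn' ▷ H ≫ (tensorPowSucc H n).hom := by
        rw [ih hn hn']
        simp
      _ = _ := by
        rw [← tensorPowAppend_succ_right H hn' h', ← reassoc_of% hcons]
        simp

theorem tensorPowCons_comp_append (h : a + 1 + b = n + 1) (h' : a + b = n) :
    (tensorPowCons H a).hom ▷ tensorPow H b ≫ tensorPowAppend H h =
      (α_ _ _ _).hom ≫ H ◁ tensorPowAppend H h' ≫ (tensorPowCons H n).hom := by
  induction b generalizing n with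
  | zero =>
    obtain rfl : a = n := h'
    exact (rightUnitor_naturality _).trans (rightUnitor_tensor_hom_assoc _ _ _)
  | succ b ih =>
    obtain ⟨n, rfl⟩ : ∃ n', n = n' + 1 := ⟨a + b, by omega⟩
    obtain ⟨hn, hn'⟩ : a + 1 + b = n + 1 ∧ a + b = n := by omega
    have happend := congrArg (H ◁ ·) (tensorPowAppend_succ_right H hn' h')
    simp only [whiskerLeft_comp] at happend
    rw [← cancel_epi ((H ⊗ tensorPow H a) ◁ (tensorPowSucc H b).hom)]
    calc
      _ = (α_ _ _ _).inv ≫ ((tensorPowCons H a).hom ▷ tensorPow H b ≫ tensorPowAppend H hn) ▷ H ≫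
          (tensorPowSucc H (n + 1)).hom := by
        rw [whisker_exchange_assoc, tensorPowAppend_succ_right H hn]
        simp
      _ = (α_ _ _ _).hom ≫ H ◁ (α_ _ _ _).inv ≫ H ◁ tensorPowAppend H hn' ▷ H ≫
          H ◁ (tensorPowSucc H n).hom ≫ (tensorPowCons H (n + 1)).hom := by
        rw [ih hn hn', tensorPowCons_succ]
        simp
      _ = _ := by
        rw [← reassoc_of% happend]
        simp

end Append

section EndoPow

variable {K : Type u} [Category.{v} K] {X Y : K}

theorem endoPow_succ' (f : X ⟶ X) (n : ℕ) : endoPow f (n + 1) = endoPow f n ≫ f := by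
  induction n with
  | zero => simp [endoPow]
  | succ n ih =>
    calc
      _ = f ≫ endoPow f n ≫ f := congrArg (f ≫ ·) ih
      _ = _ := (Category.assoc _ _ _).symm

theorem endoPow_comp_eq {f : X ⟶ X} {g : Y ⟶ Y} {p : X ⟶ Y} (h : f ≫ p = p ≫ g) (n : ℕ) :
    endoPow f n ≫ p = p ≫ endoPow g n := by
  induction n with
  | zero => simp [endoPow]
  | succ n ih => rw [endoPow, endoPow, Category.assoc, ih, reassoc_of% h]

end EndoPow

section Rotation

/-- The tensor power `f ⊗ ⋯ ⊗ f` of an endomorphism `f`. -/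
def tensorPowMap {H : D} (f : H ⟶ H) : ∀ n : ℕ, tensorPow H n ⟶ tensorPow H n
  | 0 => 𝟙 _
  | n + 1 => (tensorPowSucc H n).inv ≫ (tensorPowMap f n ⊗ₘ f) ≫ (tensorPowSucc H n).hom

/-- The rotation `h₀ ⊗ h₁ ⊗ ⋯ ⊗ hₙ ↦ h₁ ⊗ ⋯ ⊗ hₙ ⊗ f(h₀)` of `H^{⊗(n+1)}`. -/
def tensorPowRot [BraidedCategory D] {H : D} (f : H ⟶ H) (n : ℕ) :
    tensorPow H (n + 1) ⟶ tensorPow H (n + 1) :=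
  (tensorPowCons H n).inv ≫ (β_ H (tensorPow H n)).hom ≫ tensorPow H n ◁ f ≫
    (tensorPowSucc H n).hom

theorem braiding_tensor_comp_braiding_tensor (A B X : C) :
    (α_ A X B).hom ≫ (β_ A (X ⊗ B)).hom ≫ (α_ X B A).hom ≫ (β_ X (B ⊗ A)).hom =
      (β_ (A ⊗ X) B).hom ≫ (α_ B A X).inv := by
  calc
    _ = 𝟙 _ ⊗≫ (β_ A X).hom ▷ B ⊗≫ (X ◁ (β_ A B).hom ≫ (β_ X (B ⊗ A)).hom) := by
      rw [BraidedCategory.braiding_tensor_right_hom A]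
      monoidal
    _ = 𝟙 _ ⊗≫ ((β_ A X).hom ≫ (β_ X A).hom) ▷ B ⊗≫ A ◁ (β_ X B).hom ⊗≫ (β_ A B).hom ▷ X := by
      rw [BraidedCategory.braiding_naturality_right, BraidedCategory.braiding_tensor_right_hom X]
      monoidal
    _ = _ := by
      rw [SymmetricCategory.symmetry, BraidedCategory.braiding_tensor_left_hom]
      monoidal

theorem braiding_comp_of_whiskerRight_comp {A B B' X Q R : C} {c : X ⊗ B ⟶ B'} {g : A ⟶ A}
    {f : X ⟶ X} {j : B ⊗ A ⟶ Q} {r : B' ⊗ A ⟶ R} {s : Q ⊗ X ⟶ R}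
    (h : c ▷ A ≫ r = (α_ X B A).hom ≫ X ◁ j ≫ (β_ X Q).hom ≫ Q ◁ f ≫ s) :
    (α_ A X B).hom ≫ A ◁ c ≫ (β_ A B').hom ≫ B' ◁ g ≫ r =
      (β_ (A ⊗ X) B).hom ≫ B ◁ (g ⊗ₘ f) ≫ (α_ B A X).inv ≫ j ▷ X ≫ s := by
  calc
    _ = (α_ A X B).hom ≫ (A ◁ 𝟙 (X ⊗ B) ≫ (β_ A (X ⊗ B)).hom ≫ (X ⊗ B) ◁ g) ≫ (α_ X B A).hom ≫
        (X ◁ j ≫ (β_ X Q).hom) ≫ Q ◁ f ≫ s := by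
      rw [BraidedCategory.braiding_naturality_right_assoc, ← whisker_exchange_assoc, h]
      simp
    _ = (α_ A X B).hom ≫ (β_ A (X ⊗ B)).hom ≫ (α_ X B A).hom ≫
        (X ◁ (B ◁ g) ≫ (β_ X (B ⊗ A)).hom) ≫ (j ▷ X ≫ Q ◁ f) ≫ s := by
      rw [BraidedCategory.braiding_naturality_right]
      simp
    _ = ((α_ A X B).hom ≫ (β_ A (X ⊗ B)).hom ≫ (α_ X B A).hom ≫ (β_ X (B ⊗ A)).hom) ≫
        (B ◁ g) ▷ X ≫ (B ⊗ A) ◁ f ≫ j ▷ X ≫ s := by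
      rw [BraidedCategory.braiding_naturality_right, ← whisker_exchange]
      simp
    _ = _ := by
      rw [braiding_tensor_comp_braiding_tensor, MonoidalCategory.tensorHom_def]
      simp

theorem tensorPowAppend_comp_endoPow_rot {H : C} (f : H ⟶ H) {k m n : ℕ} (h : k + m = n + 1)
    (h' : m + k = n + 1) :
    tensorPowAppend H h ≫ endoPow (tensorPowRot f n) k =
      (β_ (tensorPow H k) (tensorPow H m)).hom ≫ tensorPow H m ◁ tensorPowMap f k ≫
        tensorPowAppend H h' := by
  induction k generalizing m with
  | zero =>
    obtain rfl : m = n + 1 := h'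
    rw [tensorPowAppend_zero_left, tensorPowAppend_zero_right]
    change (λ_ _).hom ≫ 𝟙 _ = (β_ (𝟙_ C) _).hom ≫ _ ◁ 𝟙 (𝟙_ C) ≫ (ρ_ _).hom
    simp
  | succ k ih =>
    obtain ⟨hn, hn', hmk⟩ : k + (m + 1) = n + 1 ∧ m + 1 + k = n + 1 ∧ m + k = n := by omega
    have hrot : (tensorPowCons H m).hom ▷ tensorPow H k ≫ tensorPowAppend H hn' ≫
        tensorPowRot f n =
          (α_ _ _ _).hom ≫ H ◁ tensorPowAppend H hmk ≫ (β_ H (tensorPow H n)).hom ≫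
            tensorPow H n ◁ f ≫ (tensorPowSucc H n).hom := by
      rw [reassoc_of% tensorPowCons_comp_append H hn' hmk, tensorPowRot, Iso.hom_inv_id_assoc]
    rw [← cancel_epi ((tensorPowSucc H k).hom ▷ tensorPow H m), endoPow_succ',
      reassoc_of% tensorPowSucc_comp_append H h hn, reassoc_of% ih hn hn',
      braiding_comp_of_whiskerRight_comp hrot, BraidedCategory.braiding_naturality_left_assoc,
      tensorPowMap, ← tensorPowAppend_succ_right H hmk h']
    simp

theorem endoPow_tensorPowRot {H : C} (f : H ⟶ H) (n : ℕ) :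
    endoPow (tensorPowRot f n) (n + 1) = tensorPowMap f (n + 1) := by
  have h : (ρ_ _).hom ≫ endoPow (tensorPowRot f n) (n + 1) =
      (β_ _ (𝟙_ C)).hom ≫ 𝟙_ C ◁ tensorPowMap f (n + 1) ≫ (λ_ _).hom :=
    (tensorPowAppend_comp_endoPow_rot f (n + 1).add_zero (n + 1).zero_add).trans
      (by rw [tensorPowAppend_zero_left]; rfl)
  simpa using h

end Rotation

section TensorPowMon

variable [BraidedCategory D] (H : D) [MonObj H]

instance tensorPow.instMonObj : ∀ n : ℕ, MonObj (tensorPow H n)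
  | 0 => inferInstanceAs (MonObj (𝟙_ D))
  | 1 => inferInstanceAs (MonObj H)
  | n + 2 =>
    letI := tensorPow.instMonObj (n + 1)
    inferInstanceAs (MonObj (tensorPow H (n + 1) ⊗ H))

instance isMonHom_tensorPowSucc_hom : ∀ n : ℕ, IsMonHom (tensorPowSucc H n).hom
  | 0 => inferInstanceAs (IsMonHom (λ_ H).hom)
  | n + 1 => inferInstanceAs (IsMonHom (𝟙 (tensorPow H (n + 1) ⊗ H)))

instance isMonHom_tensorPowCons_hom : ∀ n : ℕ, IsMonHom (tensorPowCons H n).hom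
  | 0 => inferInstanceAs (IsMonHom (ρ_ H).hom)
  | 1 => inferInstanceAs (IsMonHom (𝟙 (H ⊗ H)))
  | n + 2 =>
    have := isMonHom_tensorPowCons_hom (n + 1)
    inferInstanceAs (IsMonHom ((α_ H (tensorPow H (n + 1)) H).inv ≫
      (tensorPowCons H (n + 1)).hom ▷ H))

end TensorPowMon

namespace HopfObj

instance instHopfObj (A : _root_.HopfObj C) : CategoryTheory.HopfObj A.X where
  one := A.one
  mul := A.mul
  one_mul := A.one_mul
  mul_one := A.mul_one
  mul_assoc := A.mul_assoc
  counit := A.counit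
  comul := A.comul
  counit_comul := A.counit_comul
  comul_counit := A.comul_counit
  comul_assoc := by simp [← A.comul_assoc]
  mul_comul := by simpa [tensorμ] using A.mul_comul
  one_comul := A.one_comul
  mul_counit := A.mul_counit
  one_counit := A.one_counit
  antipode := A.antipode
  antipode_left := A.antipode_left
  antipode_right := A.antipode_right

variable (A : _root_.HopfObj C)

theorem iterMul_eq_mul : ∀ n : ℕ, A.iterMul n = μ[tensorPow A.X (n + 1)]
  | 0 => rfl
  | n + 1 => by
    rw [HopfObj.iterMul, iterMul_eq_mul n]
    change _ = tensorμ _ _ _ _ ≫ (μ[tensorPow A.X (n + 1)] ⊗ₘ A.mul)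
    simp only [tensorμ, Category.assoc]
    rfl

instance isMonHom_iterComul : ∀ n : ℕ, IsMonHom (A.iterComul n)
  | 0 => inferInstanceAs (IsMonHom (𝟙 A.X))
  | n + 1 =>
    have := isMonHom_iterComul n
    inferInstanceAs (IsMonHom
      (Δ[A.X] ≫ A.X ◁ A.iterComul n ≫ (tensorPowCons A.X (n + 1)).hom))

theorem iterComul_succ_cons (n : ℕ) :
    A.iterComul (n + 1) = Δ ≫ A.X ◁ A.iterComul n ≫ (tensorPowCons A.X (n + 1)).hom :=
  rfl

theorem iterComul_succ (n : ℕ) :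
    A.iterComul (n + 1) = Δ ≫ A.iterComul n ▷ A.X ≫ (tensorPowSucc A.X (n + 1)).hom := by
  induction n with
  | zero =>
    change Δ[A.X] ≫ A.X ◁ 𝟙 A.X ≫ 𝟙 (A.X ⊗ A.X) = Δ[A.X] ≫ 𝟙 A.X ▷ A.X ≫ 𝟙 (A.X ⊗ A.X)
    simp
  | succ n ih =>
    calc
      _ = (Δ ≫ A.X ◁ Δ) ≫ A.X ◁ A.iterComul n ▷ A.X ≫
          A.X ◁ (tensorPowSucc A.X (n + 1)).hom ≫ (tensorPowCons A.X (n + 2)).hom := by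
        rw [iterComul_succ_cons, ih]
        simp
      _ = Δ ≫ (Δ ≫ A.X ◁ A.iterComul n ≫ (tensorPowCons A.X (n + 1)).hom) ▷ A.X ≫
          (tensorPowSucc A.X (n + 2)).hom := by
        rw [tensorPowCons_succ]
        simp
      _ = _ := by rw [← iterComul_succ_cons]

theorem pointMul_comp_iterComul {σ : 𝟙_ C ⟶ A.X}
    (hσ : σ ≫ Δ = (λ_ (𝟙_ C)).inv ≫ (σ ⊗ₘ σ)) (n : ℕ) :
    pointMul (σ ≫ A.iterComul n) = tensorPowMap (pointMul σ) (n + 1) := by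
  induction n with
  | zero =>
    change pointMul (σ ≫ 𝟙 A.X) = (λ_ A.X).inv ≫ (𝟙 (𝟙_ C) ⊗ₘ pointMul σ) ≫ (λ_ A.X).hom
    simp
  | succ n ih =>
    have h : σ ≫ A.iterComul (n + 1) =
        ((λ_ (𝟙_ C)).inv ≫ ((σ ≫ A.iterComul n) ⊗ₘ σ)) ≫ (tensorPowSucc A.X (n + 1)).hom := by
      rw [iterComul_succ, reassoc_of% hσ]
      simp [MonoidalCategory.tensorHom_def']
    rw [h, tensorPowMap, Iso.eq_inv_comp, comp_pointMul, pointMul_tensorHom, ih]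

/-- The projection `g ⊗ h₀ ⊗ ⋯ ⊗ hₙ ↦ Δⁿ(S̃ g) · (h₀ ⊗ ⋯ ⊗ hₙ)`, which exhibits `H^{⊗(n+1)}` as the
coinvariants of the diagonal action of `H` on `H^{⊗(n+2)}` twisted by `δ`. -/
def coinvProj (δ : A.X ⟶ 𝟙_ C) (n : ℕ) : tensorPow A.X (n + 2) ⟶ tensorPow A.X (n + 1) :=
  (tensorPowCons A.X (n + 1)).inv ≫ mulLeft (twistedAntipode δ ≫ A.iterComul n)

/-- The section `h₀ ⊗ ⋯ ⊗ hₙ ↦ 1 ⊗ h₀ ⊗ ⋯ ⊗ hₙ` of `coinvProj`. -/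
def coinvSection (n : ℕ) : tensorPow A.X (n + 1) ⟶ tensorPow A.X (n + 2) :=
  (λ_ _).inv ≫ η ▷ _ ≫ (tensorPowCons A.X (n + 1)).hom

variable (δ : A.X ⟶ 𝟙_ C)

theorem coinvSection_comp_coinvProj [IsMonHom δ] (n : ℕ) :
    A.coinvSection n ≫ A.coinvProj δ n = 𝟙 _ := by
  have h : η ≫ twistedAntipode δ ≫ A.iterComul n = η := by
    rw [reassoc_of% one_twistedAntipode δ, IsMonHom.one_hom]
  rw [coinvSection, coinvProj, Category.assoc, Category.assoc, Iso.hom_inv_id_assoc,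
    ← mulLeft_comp, h, mulLeft_one, Iso.inv_hom_id]

theorem mulLeft_iterComul_comp_coinvProj [IsMonHom δ] (n : ℕ) :
    mulLeft (A.iterComul (n + 1)) ≫ A.coinvProj δ n = mulLeft (δ ≫ η) ≫ A.coinvProj δ n := by
  have hcons : IsMonHom (tensorPowCons A.X (n + 1)).inv := inferInstance
  have h := mulLeft_comul_comp_mulLeft_twistedAntipode δ (A.iterComul n)
  rw [coinvProj, reassoc_of% mulLeft_comp_hom, reassoc_of% mulLeft_comp_hom, iterComul_succ_cons]
  simp [h]

theorem tensorPowSnoc_comp_coinvProj (σ : 𝟙_ C ⟶ A.X) (n : ℕ) :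
    tensorPowSnoc A.X σ (n + 1) ≫ A.coinvProj δ n = A.cyclicOp δ σ n := by
  rw [coinvProj, HopfObj.cyclicOp, iterMul_eq_mul, Iso.eq_inv_comp,
    ← reassoc_of% tensorPowCons_comp_snoc, Iso.hom_inv_id_assoc, mulLeft,
    ← MonoidalCategory.tensorHom_def'_assoc]
  rfl

theorem tensorPowRot_comp_coinvProj {δ : A.X ⟶ 𝟙_ C} [IsMonHom δ] {σ : 𝟙_ C ⟶ A.X}
    (hσ : pointMul σ = twistedAntipode δ ≫ twistedAntipode δ ≫ (ρ_ A.X).inv ≫ A.X ◁ σ ≫ μ)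
    (n : ℕ) :
    tensorPowRot (pointMul σ) (n + 1) ≫ A.coinvProj δ n =
      A.coinvProj δ n ≫ A.cyclicOp δ σ n := by
  have hf : mulLeft (Δ ≫ A.iterComul n ▷ A.X) ≫
      (tensorPowSucc A.X (n + 1)).hom ≫ A.coinvProj δ n =
        mulLeft (δ ≫ η) ≫ (tensorPowSucc A.X (n + 1)).hom ≫ A.coinvProj δ n := by
    rw [reassoc_of% mulLeft_comp_hom, reassoc_of% mulLeft_comp_hom, Category.assoc, Category.assoc,
      ← iterComul_succ, mulLeft_iterComul_comp_coinvProj, IsMonHom.one_hom]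
  have h := mulLeft_twistedAntipode_comp_of_coinvariant hf hσ
  rw [← tensorPowSnoc_comp_coinvProj, tensorPowSnoc_eq, tensorPowRot]
  simp only [Category.assoc, ← h]
  exact (Category.assoc _ _ _).symm

end HopfObj

/-- For a Hopf monoid in a symmetric monoidal category and a braided
modular pair in involution `(δ, σ)`, for every `n ≥ 1` the `(n+1)`-fold composite of
`τ_n` is the identity (here stated for `τ_{n+1}`, for all `n : ℕ`). -/
theorem HopfObj.cyclicOp_pow_eq_id (A : _root_.HopfObj C)
    (δ : A.X ⟶ 𝟙_ C) (σ : 𝟙_ C ⟶ A.X)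
    (hδ : A.IsCharacter δ) (hσ : A.IsCocharacter σ) (hbmpi : A.IsBMPI δ σ) :
    ∀ n : ℕ, endoPow (A.cyclicOp δ σ n) (n + 2) = 𝟙 (tensorPow A.X (n + 1)) := by
  intro n
  have : IsMonHom δ := ⟨hδ.2, hδ.1⟩
  have hinv := pointMul_eq_of_bmpi (δ := δ) hσ.1 hσ.2 hbmpi.2
  have hproj : A.coinvProj δ n ≫ endoPow (A.cyclicOp δ σ n) (n + 2) = A.coinvProj δ n :=
    calc
      _ = endoPow (tensorPowRot (pointMul σ) (n + 1)) (n + 2) ≫ A.coinvProj δ n :=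
        (endoPow_comp_eq (A.tensorPowRot_comp_coinvProj hinv n) (n + 2)).symm
      _ = pointMul (σ ≫ A.iterComul (n + 1)) ≫ A.coinvProj δ n := by
        rw [endoPow_tensorPowRot, A.pointMul_comp_iterComul hσ.1]
      _ = pointMul (σ ≫ δ ≫ η) ≫ A.coinvProj δ n := by
        simp only [pointMul, mulLeft_comp, Category.assoc, A.mulLeft_iterComul_comp_coinvProj]
      _ = A.coinvProj δ n := by
        rw [reassoc_of% hbmpi.1, pointMul, mulLeft_one, Iso.inv_hom_id, Category.id_comp]
  rw [← Category.id_comp (endoPow _ _), ← A.coinvSection_comp_coinvProj δ n, Category.assoc, hproj]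
end

section
/- Let C be an abelian category with a symmetric monoidal structure, H a Hopf monoid in C, and (M, φ, ϱ) a right–left braided stable anti-Yetter–Drinfeld module over H. Let Φ := (m ⊗ m) ∘ (1_H ⊗ ψ_{H,H} ⊗ 1_{H⊗H}) ∘ (Δ ⊗ 1_{H⊗H}) : H ⊗ (H ⊗ H) → H ⊗ H be the diagonal left action, f := (φ ⊗ 1_{H⊗H}) − (1_M ⊗ Φ) : M ⊗ H ⊗ (H ⊗ H) → M ⊗ (H ⊗ H), α := (1_{M⊗H} ⊗ m) ∘ (1_M ⊗ ψ_{H⊗H,H}) ∘ (ψ_{H,M} ⊗ 1_{H⊗H}) ∘ (ϱ ⊗ Δ) : M ⊗ H → M ⊗ H ⊗ H, and β := (1_M ⊗ η ⊗ 1_H) ∘ ψ_{H,M} ∘ ϱ ∘ φ : M ⊗ H → M ⊗ H ⊗ H (all up to suppressed associators/unitors). Then, letting π : M ⊗ H ⊗ H → coker(f) be the cokernel projection, π ∘ α = π ∘ β. -/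
/-!
In Sweedler notation `α (m ⊗ h) = m₀ ⊗ (h₂ ⊗ m₋₁ h₁)`, and the anti-Yetter–Drinfeld condition gives
`β (m ⊗ h) = m₀ h₂ ⊗ (1 ⊗ S(h₃) m₋₁ h₁)`. Modulo the image of `f` the factor `h₂` may be moved from
`M` to the diagonal action on `H ⊗ H`, which takes `h ⊗ (1 ⊗ k)` to `h₁ ⊗ h₂ k`, the value of the
Galois map at `h ⊗ k`. The element to which the Galois map is thus applied, `h₂ ⊗ S(h₃) m₋₁ h₁`, is
the value of the inverse Galois map at `h₂ ⊗ m₋₁ h₁`, so what remains is `α (m ⊗ h)`.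
-/

open CategoryTheory MonoidalCategory

universe v u

variable {C : Type u} [Category.{v} C] [MonoidalCategory C] [SymmetricCategory C]
  [Abelian C]

/-- The diagonal left action `Φ = (m ⊗ m) ∘ (1_H ⊗ ψ ⊗ 1_H) ∘ (Δ ⊗ 1_{H⊗H})` of `H`
on `H ⊗ H`. -/
def HopfObj.diag2 (A : _root_.HopfObj C) : A.X ⊗ (A.X ⊗ A.X) ⟶ A.X ⊗ A.X :=
  (A.comul ▷ (A.X ⊗ A.X)) ≫ (α_ A.X A.X (A.X ⊗ A.X)).hom ≫
    (A.X ◁ (α_ A.X A.X A.X).inv) ≫ (A.X ◁ ((β_ A.X A.X).hom ▷ A.X)) ≫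
    (A.X ◁ (α_ A.X A.X A.X).hom) ≫ (α_ A.X A.X (A.X ⊗ A.X)).inv ≫ (A.mul ⊗ₘ A.mul)

theorem comp_cokernel_π_sub {D : Type u} [Category.{v} D] [Preadditive D] {X Y : D} (f g : X ⟶ Y)
    [Limits.HasCokernel (f - g)] :
    f ≫ Limits.cokernel.π (f - g) = g ≫ Limits.cokernel.π (f - g) := by
  rw [← sub_eq_zero, ← Preadditive.sub_comp, Limits.cokernel.condition]

section Braiding

variable {D : Type u} [Category.{v} D] [MonoidalCategory D]

/-- The braiding in the anti-Yetter–Drinfeld condition: it carries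
`m₋₁ ⊗ m₀ ⊗ (h₁ ⊗ h₂ ⊗ h₃)` to `(h₃ ⊗ m₋₁ ⊗ h₁) ⊗ (m₀ ⊗ h₂)`. -/
def aydBraiding [BraidedCategory D] (X M P Q R : D) :
    (X ⊗ M) ⊗ (P ⊗ (Q ⊗ R)) ⟶ (R ⊗ (X ⊗ P)) ⊗ (M ⊗ Q) :=
  (α_ X M (P ⊗ (Q ⊗ R))).hom ≫
    X ◁ ((α_ M P (Q ⊗ R)).inv ≫ (β_ M P).hom ▷ (Q ⊗ R) ≫ (α_ P M (Q ⊗ R)).hom) ≫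
    X ◁ P ◁ (M ◁ (β_ Q R).hom ≫ (α_ M R Q).inv ≫ (β_ M R).hom ▷ Q ≫ (α_ R M Q).hom) ≫
    (α_ X P (R ⊗ (M ⊗ Q))).inv ≫
    (α_ (X ⊗ P) R (M ⊗ Q)).inv ≫
    (β_ (X ⊗ P) R).hom ▷ (M ⊗ Q)

variable [SymmetricCategory D]

theorem whiskerLeft_braiding_braiding_whiskerRight_braiding (X Y Z : D) :
    X ◁ (β_ Y Z).hom ≫ (α_ X Z Y).inv ≫ (β_ X Z).hom ▷ Y ≫ (β_ (Z ⊗ X) Y).hom =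
      (β_ X (Y ⊗ Z)).hom ≫ (α_ Y Z X).hom := by
  rw [BraidedCategory.braiding_naturality_left, BraidedCategory.braiding_tensor_left_hom,
    BraidedCategory.braiding_tensor_right_hom]
  simp [← MonoidalCategory.whiskerLeft_comp_assoc]

theorem whiskerLeft_braiding_braiding_tensor_left (X Y Z : D) :
    (α_ X Y Z).hom ≫ X ◁ (β_ Y Z).hom ≫ (α_ X Z Y).inv ≫ (β_ (X ⊗ Z) Y).hom =
      (β_ X Y).hom ▷ Z ≫ (α_ Y X Z).hom := by
  simp [← MonoidalCategory.whiskerLeft_comp_assoc]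

theorem whiskerLeft_braiding_braiding_whiskerRight_braiding_tensor (Y M Q R : D) :
    Y ◁ (M ◁ (β_ Q R).hom ≫ (α_ M R Q).inv ≫ (β_ M R).hom ▷ Q ≫ (α_ R M Q).hom) ≫
        (α_ Y R (M ⊗ Q)).inv ≫ (β_ Y R).hom ▷ (M ⊗ Q) ≫ (β_ (R ⊗ Y) (M ⊗ Q)).hom ≫
        (α_ M Q (R ⊗ Y)).hom =
      (β_ Y (M ⊗ (Q ⊗ R))).hom ≫ (α_ M (Q ⊗ R) Y).hom ≫ M ◁ (α_ Q R Y).hom := by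
  have hMQR : M ◁ (β_ Q R).hom ≫ (α_ M R Q).inv ≫ (β_ M R).hom ▷ Q ≫ (α_ R M Q).hom =
      (α_ M Q R).inv ≫ (β_ (M ⊗ Q) R).hom := by
    simp [BraidedCategory.braiding_tensor_left_hom]
  rw [hMQR, MonoidalCategory.whiskerLeft_comp_assoc,
    reassoc_of% whiskerLeft_braiding_braiding_whiskerRight_braiding Y (M ⊗ Q) R,
    BraidedCategory.braiding_naturality_right_assoc]
  monoidal

theorem aydBraiding_comp_braiding (X M P Q R : D) :
    aydBraiding X M P Q R ≫ (β_ (R ⊗ (X ⊗ P)) (M ⊗ Q)).hom ≫ (α_ M Q (R ⊗ (X ⊗ P))).hom =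
      (β_ X M).hom ▷ (P ⊗ (Q ⊗ R)) ≫ (α_ M X (P ⊗ (Q ⊗ R))).hom ≫
        M ◁ ((α_ X P (Q ⊗ R)).inv ≫ (β_ (X ⊗ P) (Q ⊗ R)).hom ≫ (α_ Q R (X ⊗ P)).hom) := by
  calc aydBraiding X M P Q R ≫ (β_ (R ⊗ (X ⊗ P)) (M ⊗ Q)).hom ≫ (α_ M Q (R ⊗ (X ⊗ P))).hom
    _ = (α_ X M (P ⊗ (Q ⊗ R))).hom ≫
          X ◁ ((α_ M P (Q ⊗ R)).inv ≫ (β_ M P).hom ▷ (Q ⊗ R) ≫ (α_ P M (Q ⊗ R)).hom) ≫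
          (α_ X P (M ⊗ (Q ⊗ R))).inv ≫ (β_ (X ⊗ P) (M ⊗ (Q ⊗ R))).hom ≫
          (α_ M (Q ⊗ R) (X ⊗ P)).hom ≫ M ◁ (α_ Q R (X ⊗ P)).hom := by
      rw [← whiskerLeft_braiding_braiding_whiskerRight_braiding_tensor]
      simp only [aydBraiding]
      monoidal
    _ = (α_ (X ⊗ M) P (Q ⊗ R)).inv ≫
          ((α_ X M P).hom ≫ X ◁ (β_ M P).hom ≫ (α_ X P M).inv ≫ (β_ (X ⊗ P) M).hom) ▷ (Q ⊗ R) ≫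
          (α_ M (X ⊗ P) (Q ⊗ R)).hom ≫ M ◁ ((β_ (X ⊗ P) (Q ⊗ R)).hom ≫ (α_ Q R (X ⊗ P)).hom) := by
      rw [BraidedCategory.braiding_tensor_right_hom (X ⊗ P) M (Q ⊗ R)]
      monoidal
    _ = _ := by
      rw [whiskerLeft_braiding_braiding_tensor_left]
      monoidal

end Braiding

namespace HopfObj

section Braided

variable {D : Type u} [Category.{v} D] [MonoidalCategory D] [BraidedCategory D]
  (A : _root_.HopfObj D)

/-- The map `h ↦ 1 ⊗ h`. -/
def oneTensor : A.X ⟶ A.X ⊗ A.X :=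
  (λ_ A.X).inv ≫ A.one ▷ A.X

/-- The Galois (or canonical) map `h ⊗ k ↦ h₁ ⊗ h₂ k`, which straightens the diagonal action:
it is the restriction of that action to `h ⊗ (1 ⊗ k)`. -/
def galoisMap : A.X ⊗ A.X ⟶ A.X ⊗ A.X :=
  A.comul ▷ A.X ≫ (α_ A.X A.X A.X).hom ≫ A.X ◁ A.mul

/-- The inverse `h ⊗ k ↦ h₁ ⊗ S(h₂) k` of the Galois map. -/
def galoisInv : A.X ⊗ A.X ⟶ A.X ⊗ A.X :=
  A.comul ▷ A.X ≫ (α_ A.X A.X A.X).hom ≫ A.X ◁ (A.antipode ▷ A.X ≫ A.mul)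

theorem comul_antipode_mul_mul :
    A.comul ▷ A.X ≫ (α_ A.X A.X A.X).hom ≫ A.X ◁ (A.antipode ▷ A.X ≫ A.mul) ≫ A.mul =
      A.counit ▷ A.X ≫ (λ_ A.X).hom := by
  calc A.comul ▷ A.X ≫ (α_ A.X A.X A.X).hom ≫ A.X ◁ (A.antipode ▷ A.X ≫ A.mul) ≫ A.mul
    _ = (A.comul ≫ A.X ◁ A.antipode) ▷ A.X ≫ (α_ A.X A.X A.X).hom ≫ A.X ◁ A.mul ≫ A.mul := by
      monoidal
    _ = (A.comul ≫ A.X ◁ A.antipode ≫ A.mul) ▷ A.X ≫ A.mul := by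
      simp [A.mul_assoc]
    _ = A.counit ▷ A.X ≫ (λ_ A.X).hom := by
      rw [A.antipode_right, comp_whiskerRight_assoc, A.one_mul]

theorem braiding_comp_mul_comp_galoisInv :
    (β_ (A.X ⊗ A.X) A.X).hom ≫ A.X ◁ A.mul ≫ A.galoisInv =
      (A.X ⊗ A.X) ◁ A.comul ≫ (β_ (A.X ⊗ A.X) (A.X ⊗ A.X)).hom ≫
        (α_ A.X A.X (A.X ⊗ A.X)).hom ≫ A.X ◁ ((A.antipode ⊗ₘ A.mul) ≫ A.mul) := by
  rw [galoisInv, BraidedCategory.braiding_naturality_right_assoc, whisker_exchange_assoc,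
    MonoidalCategory.tensorHom_def']
  monoidal

theorem galoisInv_comp_galoisMap : A.galoisInv ≫ A.galoisMap = 𝟙 (A.X ⊗ A.X) := by
  calc A.galoisInv ≫ A.galoisMap
    _ = (A.comul ≫ A.comul ▷ A.X ≫ (α_ A.X A.X A.X).hom) ▷ A.X ≫
          (α_ A.X (A.X ⊗ A.X) A.X).hom ≫
          A.X ◁ ((α_ A.X A.X A.X).hom ≫ A.X ◁ (A.antipode ▷ A.X ≫ A.mul) ≫ A.mul) := by
      simp only [galoisInv, galoisMap, Category.assoc]
      rw [whisker_exchange_assoc]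
      monoidal
    _ = A.comul ▷ A.X ≫ (α_ A.X A.X A.X).hom ≫ A.X ◁ (A.counit ▷ A.X ≫ (λ_ A.X).hom) := by
      rw [A.comul_assoc, ← A.comul_antipode_mul_mul]
      monoidal
    _ = (A.comul ≫ A.X ◁ A.counit) ▷ A.X ≫ (ρ_ A.X).hom ▷ A.X := by
      monoidal
    _ = 𝟙 (A.X ⊗ A.X) := by
      simp [A.comul_counit]

variable {M : D}

/-- The map `m ⊗ h ↦ S(h₃) m₋₁ h₁ ⊗ (m₀ ⊗ h₂)`. The anti-Yetter–Drinfeld condition says that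
the action `M ⊗ H ⟶ M` intertwines it with the coaction `ϱ` of `M`. -/
def twistedCoaction (ϱ : M ⟶ A.X ⊗ M) : M ⊗ A.X ⟶ A.X ⊗ (M ⊗ A.X) :=
  (ϱ ⊗ₘ (A.comul ≫ A.X ◁ A.comul)) ≫ aydBraiding A.X M A.X A.X A.X ≫
    ((A.antipode ⊗ₘ A.mul) ≫ A.mul) ▷ (M ⊗ A.X)

/-- The map `α : m ⊗ h ↦ m₀ ⊗ (h₂ ⊗ m₋₁ h₁)` of the theorem. -/
def twistedComul (ϱ : M ⟶ A.X ⊗ M) : M ⊗ A.X ⟶ M ⊗ (A.X ⊗ A.X) :=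
  (ϱ ⊗ₘ A.comul) ≫ (β_ A.X M).hom ▷ (A.X ⊗ A.X) ≫ (α_ M A.X (A.X ⊗ A.X)).hom ≫
    M ◁ (α_ A.X A.X A.X).inv ≫ M ◁ (β_ (A.X ⊗ A.X) A.X).hom ≫ M ◁ A.X ◁ A.mul

end Braided

section Symmetric

variable {D : Type u} [Category.{v} D] [MonoidalCategory D] [SymmetricCategory D]
  (A : _root_.HopfObj D) {M : D}

theorem diag2_eq_comul_comp_tensorμ :
    A.diag2 = A.comul ▷ (A.X ⊗ A.X) ≫ tensorμ A.X A.X A.X A.X ≫ (A.mul ⊗ₘ A.mul) := by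
  simp [diag2, tensorμ]

theorem whiskerLeft_oneTensor_comp_diag2 :
    A.X ◁ A.oneTensor ≫ A.diag2 = A.galoisMap := by
  have unit_tensorμ : (A.X ⊗ A.X) ◁ (λ_ A.X).inv ≫ tensorμ A.X A.X (𝟙_ D) A.X =
      (α_ A.X A.X A.X).hom ≫ (ρ_ A.X).inv ▷ (A.X ⊗ A.X) := by
    rw [tensorμ, braiding_tensorUnit_right]
    monoidal
  have tensorμ_one : (A.X ⊗ A.X) ◁ A.one ▷ A.X ≫ tensorμ A.X A.X A.X A.X =
      tensorμ A.X A.X (𝟙_ D) A.X ≫ (A.X ◁ A.one) ▷ (A.X ⊗ A.X) := by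
    simpa using tensorμ_natural_right A.X A.X A.one (𝟙 A.X)
  rw [oneTensor, diag2_eq_comul_comp_tensorμ, whisker_exchange_assoc,
    MonoidalCategory.whiskerLeft_comp_assoc, reassoc_of% tensorμ_one,
    reassoc_of% unit_tensorμ, MonoidalCategory.tensorHom_def,
    ← comp_whiskerRight_assoc (A.X ◁ A.one), A.mul_one]
  simp [galoisMap]

theorem twistedCoaction_comp_braiding (ϱ : M ⟶ A.X ⊗ M) :
    A.twistedCoaction ϱ ≫ (β_ A.X (M ⊗ A.X)).hom ≫ (α_ M A.X A.X).hom =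
      A.twistedComul ϱ ≫ M ◁ A.galoisInv := by
  calc A.twistedCoaction ϱ ≫ (β_ A.X (M ⊗ A.X)).hom ≫ (α_ M A.X A.X).hom
    _ = (ϱ ⊗ₘ (A.comul ≫ A.X ◁ A.comul)) ≫
          (aydBraiding A.X M A.X A.X A.X ≫ (β_ (A.X ⊗ (A.X ⊗ A.X)) (M ⊗ A.X)).hom ≫
            (α_ M A.X (A.X ⊗ (A.X ⊗ A.X))).hom) ≫
          M ◁ A.X ◁ ((A.antipode ⊗ₘ A.mul) ≫ A.mul) := by
      simp only [twistedCoaction, Category.assoc]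
      rw [BraidedCategory.braiding_naturality_left_assoc, associator_naturality_right]
    _ = (ϱ ⊗ₘ A.comul) ≫ (A.X ⊗ M) ◁ A.X ◁ A.comul ≫
          (β_ A.X M).hom ▷ (A.X ⊗ (A.X ⊗ A.X)) ≫ (α_ M A.X (A.X ⊗ (A.X ⊗ A.X))).hom ≫
          M ◁ ((α_ A.X A.X (A.X ⊗ A.X)).inv ≫ (β_ (A.X ⊗ A.X) (A.X ⊗ A.X)).hom ≫
            (α_ A.X A.X (A.X ⊗ A.X)).hom ≫ A.X ◁ ((A.antipode ⊗ₘ A.mul) ≫ A.mul)) := by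
      rw [aydBraiding_comp_braiding]
      simp [MonoidalCategory.tensorHom_def]
    _ = (ϱ ⊗ₘ A.comul) ≫ (β_ A.X M).hom ▷ (A.X ⊗ A.X) ≫ (α_ M A.X (A.X ⊗ A.X)).hom ≫
          M ◁ ((α_ A.X A.X A.X).inv ≫ (A.X ⊗ A.X) ◁ A.comul ≫
            (β_ (A.X ⊗ A.X) (A.X ⊗ A.X)).hom ≫ (α_ A.X A.X (A.X ⊗ A.X)).hom ≫
            A.X ◁ ((A.antipode ⊗ₘ A.mul) ≫ A.mul)) := by
      rw [whisker_exchange_assoc]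
      monoidal
    _ = A.twistedComul ϱ ≫ M ◁ A.galoisInv := by
      rw [← braiding_comp_mul_comp_galoisInv, twistedComul]
      simp

theorem sayd_cokernel_eq_general {φ : M ⊗ A.X ⟶ M} {ϱ : M ⟶ A.X ⊗ M}
    (hayd : φ ≫ ϱ = A.twistedCoaction ϱ ≫ A.X ◁ φ) {Z : D} {p : M ⊗ (A.X ⊗ A.X) ⟶ Z}
    (hp : ((α_ M A.X (A.X ⊗ A.X)).inv ≫ φ ▷ (A.X ⊗ A.X)) ≫ p = M ◁ A.diag2 ≫ p) :
    A.twistedComul ϱ ≫ p = (φ ≫ ϱ ≫ (β_ A.X M).hom ≫ M ◁ A.oneTensor) ≫ p := by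
  calc A.twistedComul ϱ ≫ p
    _ = A.twistedComul ϱ ≫ M ◁ (A.galoisInv ≫ A.galoisMap) ≫ p := by
      simp [galoisInv_comp_galoisMap]
    _ = (A.twistedCoaction ϱ ≫ (β_ A.X (M ⊗ A.X)).hom ≫ (α_ M A.X A.X).hom) ≫
          M ◁ (A.X ◁ A.oneTensor ≫ A.diag2) ≫ p := by
      rw [twistedCoaction_comp_braiding, whiskerLeft_oneTensor_comp_diag2]
      simp
    _ = A.twistedCoaction ϱ ≫ (β_ A.X (M ⊗ A.X)).hom ≫ (M ⊗ A.X) ◁ A.oneTensor ≫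
          (α_ M A.X (A.X ⊗ A.X)).hom ≫ M ◁ A.diag2 ≫ p := by
      simp
    _ = A.twistedCoaction ϱ ≫ (β_ A.X (M ⊗ A.X)).hom ≫ (M ⊗ A.X) ◁ A.oneTensor ≫
          φ ▷ (A.X ⊗ A.X) ≫ p := by
      rw [← hp, Category.assoc, Iso.hom_inv_id_assoc]
    _ = (φ ≫ ϱ ≫ (β_ A.X M).hom ≫ M ◁ A.oneTensor) ≫ p := by
      simp only [Category.assoc]
      rw [reassoc_of% hayd, BraidedCategory.braiding_naturality_right_assoc,
        whisker_exchange_assoc]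

end Symmetric

end HopfObj

/-- For a right–left braided stable anti-Yetter–Drinfeld module
`(M, φ, ϱ)` over a Hopf monoid `H` in an abelian symmetric monoidal category, with
`f = (φ ⊗ 1_{H⊗H}) - (1_M ⊗ Φ)` and `π` the cokernel projection of `f`,
one has `π ∘ α = π ∘ β`. -/
theorem HopfObj.sayd_cokernel_eq (A : _root_.HopfObj C) (M : C)
    (φ : M ⊗ A.X ⟶ M) (ϱ : M ⟶ A.X ⊗ M)
    (hact : (M ◁ A.mul) ≫ φ = (α_ M A.X A.X).inv ≫ (φ ▷ A.X) ≫ φ)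
    (hact_one : (M ◁ A.one) ≫ φ = (ρ_ M).hom)
    (hcoact : ϱ ≫ (A.comul ▷ M) ≫ (α_ A.X A.X M).hom = ϱ ≫ (A.X ◁ ϱ))
    (hcoact_counit : ϱ ≫ (A.counit ▷ M) = (λ_ M).inv)
    (hayd : φ ≫ ϱ =
      (ϱ ⊗ₘ (A.comul ≫ (A.X ◁ A.comul))) ≫
        (α_ A.X M (A.X ⊗ (A.X ⊗ A.X))).hom ≫
        (A.X ◁ ((α_ M A.X (A.X ⊗ A.X)).inv ≫ ((β_ M A.X).hom ▷ (A.X ⊗ A.X)) ≫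
          (α_ A.X M (A.X ⊗ A.X)).hom)) ≫
        (A.X ◁ (A.X ◁ (M ◁ (β_ A.X A.X).hom))) ≫
        (A.X ◁ (A.X ◁ ((α_ M A.X A.X).inv ≫ ((β_ M A.X).hom ▷ A.X) ≫
          (α_ A.X M A.X).hom))) ≫
        (α_ A.X A.X (A.X ⊗ (M ⊗ A.X))).inv ≫
        (α_ (A.X ⊗ A.X) A.X (M ⊗ A.X)).inv ≫
        ((β_ (A.X ⊗ A.X) A.X).hom ▷ (M ⊗ A.X)) ≫
        (((A.antipode ⊗ₘ A.mul) ≫ A.mul) ⊗ₘ φ))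
    (hstable : ϱ ≫ (β_ A.X M).hom ≫ φ = 𝟙 M) :
    ((ϱ ⊗ₘ A.comul) ≫ ((β_ A.X M).hom ▷ (A.X ⊗ A.X)) ≫ (α_ M A.X (A.X ⊗ A.X)).hom ≫
        (M ◁ (α_ A.X A.X A.X).inv) ≫ (M ◁ (β_ (A.X ⊗ A.X) A.X).hom) ≫
        (M ◁ (A.X ◁ A.mul))) ≫
      Limits.cokernel.π
        (((α_ M A.X (A.X ⊗ A.X)).inv ≫ (φ ▷ (A.X ⊗ A.X))) - (M ◁ A.diag2)) =
    (φ ≫ ϱ ≫ (β_ A.X M).hom ≫ (M ◁ ((λ_ A.X).inv ≫ (A.one ▷ A.X)))) ≫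
      Limits.cokernel.π
        (((α_ M A.X (A.X ⊗ A.X)).inv ≫ (φ ▷ (A.X ⊗ A.X))) - (M ◁ A.diag2)) := by
  have htwist : φ ≫ ϱ = A.twistedCoaction ϱ ≫ A.X ◁ φ := by
    simpa [twistedCoaction, aydBraiding, MonoidalCategory.tensorHom_def] using hayd
  exact A.sayd_cokernel_eq_general htwist (comp_cokernel_π_sub _ _)
end
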